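/- Let n ≥ 1 and m ≥ 1 be integers, let 0 < α_i < n and 1 < p_i < n/α_i for i = 1,…,m, set α = α_1 + ⋯ + α_m, define q by 1/q = 1/p_1 + ⋯ + 1/p_m − α/n and assume 1/q < 1, and define q_i by 1/q_i = 1/p_i − α_i/n. Let φ_1,…,φ_m, ψ be positive measurable functions on ℝ^n × (0,∞) such that there is a constant C > 0, independent of x ∈ ℝ^n and r > 0, with ∏_{i=1}^m sup_{r<t<∞} (essinf_{t<s<∞} φ_i(x,s) s^{n/p_i}) t^{−n/q_i} ≤ C ψ(x,r). Then there exists a constant C' > 0 such that for all f_i ∈ 𝓛^{p_i,φ_i}(ℝ^n), i = 1,…,m, one has ‖M_{α,m}(f_1,…,f_m)‖_{𝓛^{q,ψ}(ℝ^n)} ≤ C' ∏_{i=1}^m ‖f_i‖_{𝓛^{p_i,φ_i}(ℝ^n)}. -/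

import Mathlib

/-!
Fix a ball `B = B(x,r)` and a point `y ∈ B`. In the supremum defining `M_{α,m} f (y)`, a ball of
radius at most `r` through `y` lies in `B(x,3r)`, and its contribution is at most the product of the
linear fractional maximal functions of order `α_i` of the functions `f_i 1_{B(x,3r)}`. A ball `b` of
radius `t > r` lies in `B(x,3t)`, and by Hölder's inequality its contribution is at most
`∏ |b|^(-1/q_i) ‖f_i‖_{L^{p_i}(B(x,3t))}` (`multMFrac_le`).

The product of linear fractional maximal functions is estimated in `L^q` by Hölder's inequality
(`holder_prod`, as `1/q = ∑ 1/q_i`) and the `L^{p_i} → L^{q_i}` boundedness of each factor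
(`fracMax_strong`). The latter follows from Hedberg's pointwise inequality (`hedberg`) and the
Hardy–Littlewood maximal theorem (`strong_type`), which is derived from the Vitali covering lemma
(`weak_type`) and the layer cake formula. After normalisation this part is bounded by a constant
times `∏ |B|^(-1/q_i) ‖f_i‖_{L^{p_i}(B(x,3r))}`, the same quantity as above at `t = r`.

It remains to bound `ρ^(-n/q_i) ‖f_i‖_{L^{p_i}(B(x,3ρ))}` for `ρ ≥ r`. Since the norm over
`B(x,3ρ)` is at most that over `B(x,s)` for every `s > 3ρ`, it is at most a constant times
`‖f_i‖_{𝓛^{p_i,φ_i}} φ_i(x,s) s^(n/p_i)`; taking the essential infimum over `s > 3ρ` produces the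
supremum in the hypothesis (`local_norm_le`, `scaled_norm_le`), whose product over `i` is at most
`C ψ(x,r)`.
-/

open MeasureTheory Metric ENNReal

/-- The multilinear fractional maximal operator `M_{α,m}` on `ℝⁿ`. -/
noncomputable def multMFrac (n m : ℕ) (α : ℝ)
    (f : Fin m → EuclideanSpace ℝ (Fin n) → ℝ) (x : EuclideanSpace ℝ (Fin n)) : ℝ≥0∞ :=
  ⨆ (c : EuclideanSpace ℝ (Fin n)) (t : ℝ) (_ : x ∈ ball c t),
    volume (ball c t) ^ (α / (n : ℝ)) *
      ∏ i, (volume (ball c t))⁻¹ * ∫⁻ y in ball c t, ENNReal.ofReal |f i y|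

/-- The norm of the generalized Morrey space `𝓛^{p,φ}(ℝⁿ)`. -/
noncomputable def morreyNorm {n : ℕ} (p : ℝ) (φ : EuclideanSpace ℝ (Fin n) → ℝ → ℝ)
    (f : EuclideanSpace ℝ (Fin n) → ℝ) : ℝ≥0∞ :=
  ⨆ (x : EuclideanSpace ℝ (Fin n)) (r : ℝ) (_ : 0 < r),
    ENNReal.ofReal ((φ x r)⁻¹) *
      ((volume (ball x r))⁻¹ * ∫⁻ y in ball x r, ENNReal.ofReal (|f y| ^ p)) ^ (1 / p)

/-- The generalized Morrey norm for an `ℝ≥0∞`-valued function. -/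
noncomputable def morreyNormE {n : ℕ} (p : ℝ) (φ : EuclideanSpace ℝ (Fin n) → ℝ → ℝ)
    (g : EuclideanSpace ℝ (Fin n) → ℝ≥0∞) : ℝ≥0∞ :=
  ⨆ (x : EuclideanSpace ℝ (Fin n)) (r : ℝ) (_ : 0 < r),
    ENNReal.ofReal ((φ x r)⁻¹) *
      ((volume (ball x r))⁻¹ * ∫⁻ y in ball x r, (g y) ^ p) ^ (1 / p)

open Set Filter

section MorreyBounds

variable {n : ℕ}

/-! ### The Hardy–Littlewood maximal theorem -/

/-- The fractional maximal function `sup_{B ∋ x} |B|^β · |B|⁻¹ ∫_B g` of a nonnegative function `g`,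
over open balls. For `β = 0` it is the uncentred Hardy–Littlewood maximal function; for `β = α / n`
it is the linear fractional maximal function of order `α`. -/
noncomputable def fracMax (β : ℝ) (g : EuclideanSpace ℝ (Fin n) → ℝ≥0∞)
    (x : EuclideanSpace ℝ (Fin n)) : ℝ≥0∞ :=
  ⨆ (c : EuclideanSpace ℝ (Fin n)) (t : ℝ) (_ : x ∈ ball c t),
    volume (ball c t) ^ β * ((volume (ball c t))⁻¹ * ∫⁻ y in ball c t, g y)

theorem le_fracMax (β : ℝ) (g : EuclideanSpace ℝ (Fin n) → ℝ≥0∞)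
    {x c : EuclideanSpace ℝ (Fin n)} {t : ℝ} (h : x ∈ ball c t) :
    volume (ball c t) ^ β * ((volume (ball c t))⁻¹ * ∫⁻ y in ball c t, g y) ≤ fracMax β g x :=
  le_iSup_of_le c (le_iSup_of_le t (le_iSup_of_le h le_rfl))

theorem lt_fracMax_iff (β : ℝ) (g : EuclideanSpace ℝ (Fin n) → ℝ≥0∞)
    {x : EuclideanSpace ℝ (Fin n)} {a : ℝ≥0∞} :
    a < fracMax β g x ↔ ∃ c t, x ∈ ball c t ∧
      a < volume (ball c t) ^ β * ((volume (ball c t))⁻¹ * ∫⁻ y in ball c t, g y) := by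
  simp only [fracMax, lt_iSup_iff, exists_prop]

theorem isOpen_lt_fracMax (β : ℝ) (g : EuclideanSpace ℝ (Fin n) → ℝ≥0∞) (a : ℝ≥0∞) :
    IsOpen {x | a < fracMax β g x} := by
  rw [isOpen_iff_mem_nhds]
  intro x hx
  obtain ⟨c, t, hxt, h⟩ := (lt_fracMax_iff β g).1 hx
  filter_upwards [isOpen_ball.mem_nhds hxt] with y hy
  exact (lt_fracMax_iff β g).2 ⟨c, t, hy, h⟩

theorem measurable_fracMax (β : ℝ) (g : EuclideanSpace ℝ (Fin n) → ℝ≥0∞) :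
    Measurable (fracMax β g) :=
  measurable_of_Ioi fun a => (isOpen_lt_fracMax β g a).measurableSet

theorem volume_ball_ne_zero' (c : EuclideanSpace ℝ (Fin n)) {t : ℝ} (ht : 0 < t) :
    volume (ball c t) ≠ 0 := (measure_ball_pos volume c ht).ne'

theorem volume_ball_ne_top' (c : EuclideanSpace ℝ (Fin n)) (t : ℝ) :
    volume (ball c t) ≠ ⊤ := measure_ball_lt_top.ne

theorem volume_ball_mul (c : EuclideanSpace ℝ (Fin n)) {k t : ℝ} (hk : 0 < k) :
    volume (ball c (k * t)) = ENNReal.ofReal (k ^ n) * volume (ball c t) := by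
  rw [Measure.addHaar_ball_mul_of_pos volume c hk, Measure.addHaar_ball_center volume c]
  simp

/-- The weak type `(1,1)` inequality, from the Vitali covering lemma applied to finite subcovers of
compact subsets of the open set `{M g > a}`. -/
theorem weak_type (g : EuclideanSpace ℝ (Fin n) → ℝ≥0∞) (a : ℝ≥0∞) :
    a * volume {x | a < fracMax 0 g x} ≤ ENNReal.ofReal (4 ^ n) * ∫⁻ y, g y := by
  rw [(isOpen_lt_fracMax 0 g a).measure_eq_iSup_isCompact]
  simp only [ENNReal.mul_iSup, iSup_le_iff]
  intro K hKU hK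
  have hex : ∀ x : K, ∃ ct : EuclideanSpace ℝ (Fin n) × ℝ,
      (x : EuclideanSpace ℝ (Fin n)) ∈ ball ct.1 ct.2 ∧ a * volume (ball ct.1 ct.2) ≤ ∫⁻ y in ball ct.1 ct.2, g y := by
    rintro ⟨x, hx⟩
    obtain ⟨c, t, hxt, h⟩ := (lt_fracMax_iff 0 g).1 (hKU hx)
    have ht : 0 < t := pos_of_mem_ball hxt
    refine ⟨(c, t), hxt, ?_⟩
    rw [ENNReal.rpow_zero, one_mul] at h
    rw [mul_comm]
    calc volume (ball c t) * a ≤ volume (ball c t) *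
          ((volume (ball c t))⁻¹ * ∫⁻ y in ball c t, g y) := by gcongr
      _ = _ := by
        rw [← mul_assoc, ENNReal.mul_inv_cancel (volume_ball_ne_zero' c ht)
          (volume_ball_ne_top' c t), one_mul]
  choose ct hmem hle using hex
  obtain ⟨s, hs⟩ := hK.elim_finite_subcover (fun x : K => ball (ct x).1 (ct x).2)
    (fun x => isOpen_ball) (fun x hx => mem_iUnion.2 ⟨⟨x, hx⟩, hmem _⟩)
  obtain ⟨R, hR⟩ := (s.finite_toSet.image (fun x => (ct x).2)).bddAbove
  obtain ⟨u, hus, hdisj, hcov⟩ := Vitali.exists_disjoint_subfamily_covering_enlargement_ball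
    (s : Set K) (fun x => (ct x).1) (fun x => (ct x).2) R
    (fun x hx => hR (mem_image_of_mem _ hx)) 4 (by norm_num)
  have hufin : u.Finite := s.finite_toSet.subset hus
  have hKsub : K ⊆ ⋃ b ∈ hufin.toFinset, ball (ct b).1 (4 * (ct b).2) := by
    intro x hx
    obtain ⟨i, hi, hxi⟩ := mem_iUnion₂.1 (hs hx)
    obtain ⟨b, hb, hsub⟩ := hcov i hi
    exact mem_iUnion₂.2 ⟨b, by simpa using hb, hsub hxi⟩
  calc a * volume K
      ≤ a * ∑ b ∈ hufin.toFinset, volume (ball (ct b).1 (4 * (ct b).2)) := by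
        gcongr
        exact (measure_mono hKsub).trans (measure_biUnion_finset_le _ _)
    _ = ENNReal.ofReal (4 ^ n) * ∑ b ∈ hufin.toFinset, a * volume (ball (ct b).1 (ct b).2) := by
        rw [Finset.mul_sum, Finset.mul_sum]
        refine Finset.sum_congr rfl fun b _ => ?_
        rw [volume_ball_mul _ (by norm_num : (0 : ℝ) < 4)]
        ring
    _ ≤ ENNReal.ofReal (4 ^ n) *
          ∑ b ∈ hufin.toFinset, ∫⁻ y in ball (ct b).1 (ct b).2, g y := by
        gcongr with b hb
        exact hle b
    _ = ENNReal.ofReal (4 ^ n) * ∫⁻ y in ⋃ b ∈ hufin.toFinset, ball (ct b).1 (ct b).2, g y := by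
        rw [lintegral_biUnion_finset _ (fun b _ => measurableSet_ball)]
        simpa using hdisj
    _ ≤ ENNReal.ofReal (4 ^ n) * ∫⁻ y, g y := by
        gcongr
        exact Measure.restrict_le_self

/-- Only the part of `G` above height `a / 2` contributes to `{M G > a}`. -/
theorem weak_type_trunc {G : EuclideanSpace ℝ (Fin n) → ℝ} (hG : Measurable G) {a : ℝ}
    (ha : 0 < a) :
    ENNReal.ofReal a * volume {x | ENNReal.ofReal a < fracMax 0 (fun y => ENNReal.ofReal (G y)) x} ≤
      2 * ENNReal.ofReal (4 ^ n) * ∫⁻ y in {y | a < 2 * G y}, ENNReal.ofReal (G y) := by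
  set S : Set (EuclideanSpace ℝ (Fin n)) := {y | a < 2 * G y} with hS
  have hSm : MeasurableSet S := measurableSet_lt measurable_const (hG.const_mul 2)
  set g : EuclideanSpace ℝ (Fin n) → ℝ≥0∞ := S.indicator fun y => ENNReal.ofReal (G y) with hg
  have hadd : ENNReal.ofReal a = ENNReal.ofReal (a / 2) + ENNReal.ofReal (a / 2) := by
    rw [← ENNReal.ofReal_add (by positivity) (by positivity), add_halves]
  have hpt : ∀ y, ENNReal.ofReal (G y) ≤ g y + ENNReal.ofReal (a / 2) := by
    intro y
    by_cases hy : y ∈ S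
    · simp [hg, hy]
    · have : G y ≤ a / 2 := by
        simp only [hS, mem_ofPred_eq, not_lt] at hy
        linarith
      exact (ENNReal.ofReal_le_ofReal this).trans le_add_self
  have hmax : ∀ x, fracMax 0 (fun y => ENNReal.ofReal (G y)) x ≤
      fracMax 0 g x + ENNReal.ofReal (a / 2) := by
    intro x
    refine iSup_le fun c => iSup_le fun t => iSup_le fun hx => ?_
    have ht : 0 < t := pos_of_mem_ball hx
    refine le_trans ?_ (add_le_add_left (le_fracMax 0 g hx) _)
    rw [ENNReal.rpow_zero, one_mul, one_mul]
    calc (volume (ball c t))⁻¹ * ∫⁻ y in ball c t, ENNReal.ofReal (G y)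
        ≤ (volume (ball c t))⁻¹ * ∫⁻ y in ball c t, (g y + ENNReal.ofReal (a / 2)) := by
          gcongr with y
          exact hpt y
      _ = _ := by
          rw [lintegral_add_right _ measurable_const, setLIntegral_const, mul_add]
          congr 1
          rw [mul_comm, mul_assoc, ENNReal.mul_inv_cancel (volume_ball_ne_zero' c ht)
            (volume_ball_ne_top' c t), mul_one]
  have hsub : {x | ENNReal.ofReal a < fracMax 0 (fun y => ENNReal.ofReal (G y)) x} ⊆
      {x | ENNReal.ofReal (a / 2) < fracMax 0 g x} := by
    intro x hx
    have h := lt_of_lt_of_le hx (hmax x)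
    rw [hadd] at h
    exact lt_of_add_lt_add_right h
  calc _ ≤ ENNReal.ofReal a * volume {x | ENNReal.ofReal (a / 2) < fracMax 0 g x} := by
        gcongr
    _ = 2 * (ENNReal.ofReal (a / 2) * volume {x | ENNReal.ofReal (a / 2) < fracMax 0 g x}) := by
        rw [hadd]; ring
    _ ≤ 2 * (ENNReal.ofReal (4 ^ n) * ∫⁻ y, g y) :=
        mul_le_mul' le_rfl (weak_type g _)
    _ = _ := by rw [hg, lintegral_indicator hSm, mul_assoc]

/-- The Hardy–Littlewood maximal theorem on `L^p`, `p > 1`. Both the integral of `(M G)^p` and, with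
respect to the measure with density `G`, that of `(2 G)^(p-1)` are expanded by the layer cake formula
and compared level by level. -/
theorem strong_type {p : ℝ} (hp : 1 < p) :
    ∃ K : ℝ≥0∞, K ≠ ⊤ ∧ ∀ G : EuclideanSpace ℝ (Fin n) → ℝ, Measurable G → (∀ y, 0 ≤ G y) →
      ∫⁻ x, fracMax 0 (fun y => ENNReal.ofReal (G y)) x ^ p ≤
        K * ∫⁻ y, ENNReal.ofReal (G y) ^ p := by
  refine ⟨ENNReal.ofReal p * (2 * ENNReal.ofReal (4 ^ n)) * (ENNReal.ofReal (p - 1))⁻¹ *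
    ENNReal.ofReal (2 ^ (p - 1)), ?_, ?_⟩
  · have : ENNReal.ofReal (p - 1) ≠ 0 := by simpa using hp
    finiteness
  intro G hG hG0
  set g : EuclideanSpace ℝ (Fin n) → ℝ≥0∞ := fun y => ENNReal.ofReal (G y) with hg
  have hgm : Measurable g := hG.ennreal_ofReal
  set ν := (volume : Measure (EuclideanSpace ℝ (Fin n))).withDensity g with hν
  have hMm := measurable_fracMax 0 g
  have hp1 : 0 < p - 1 := by linarith
  have hp0 : 0 < p := by linarith
  have hν2 : ENNReal.ofReal (p - 1) * ∫⁻ t in Ioi (0 : ℝ), ν {y | t < 2 * G y} *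
      ENNReal.ofReal (t ^ (p - 1 - 1)) =
        ENNReal.ofReal (2 ^ (p - 1)) * ∫⁻ y, ENNReal.ofReal (G y) ^ p := by
    rw [← lintegral_rpow_eq_lintegral_meas_lt_mul ν
      (Eventually.of_forall fun y => mul_nonneg zero_le_two (hG0 y))
      (hG.const_mul 2).aemeasurable hp1, hν, lintegral_withDensity_eq_lintegral_mul _ hgm
      (by fun_prop), ← lintegral_const_mul _ (by fun_prop)]
    refine lintegral_congr fun y => ?_
    simp only [Pi.mul_apply, hg]
    rw [ENNReal.ofReal_rpow_of_nonneg (hG0 y) hp0.le, ← ENNReal.ofReal_mul (hG0 y),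
      ← ENNReal.ofReal_mul (by positivity), Real.mul_rpow zero_le_two (hG0 y)]
    congr 1
    rcases (hG0 y).eq_or_lt with h | h
    · rw [← h, Real.zero_rpow hp0.ne']; simp
    · rw [mul_left_comm, Real.rpow_sub_one h.ne']
      field_simp
  have hN : ∀ N : ℕ, ∫⁻ x, (min (fracMax 0 g x) N) ^ p ≤
      ENNReal.ofReal p * (2 * ENNReal.ofReal (4 ^ n)) * (∫⁻ t in Ioi (0 : ℝ), ν {y | t < 2 * G y} *
      ENNReal.ofReal (t ^ (p - 1 - 1))) := by
    intro N
    have hfin : ∀ x, min (fracMax 0 g x) N ≠ ⊤ := fun x =>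
      ((min_le_right _ _).trans_lt (ENNReal.natCast_lt_top N)).ne
    have h1 : ∀ x, (min (fracMax 0 g x) N) ^ p =
        ENNReal.ofReal ((min (fracMax 0 g x) N).toReal ^ p) := by
      intro x
      rw [← ENNReal.ofReal_rpow_of_nonneg ENNReal.toReal_nonneg hp0.le,
        ENNReal.ofReal_toReal (hfin x)]
    simp_rw [h1]
    rw [lintegral_rpow_eq_lintegral_meas_lt_mul volume
      (Eventually.of_forall fun y => ENNReal.toReal_nonneg)
      (hMm.min measurable_const).ennreal_toReal.aemeasurable hp0, mul_assoc]
    gcongr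
    rw [← lintegral_const_mul' _ _ (by finiteness)]
    refine setLIntegral_mono' measurableSet_Ioi fun t ht => ?_
    have ht : 0 < t := ht
    have hsub : {x | t < (min (fracMax 0 g x) N).toReal} ⊆ {x | ENNReal.ofReal t < fracMax 0 g x} := by
      intro x hx
      exact ((ENNReal.ofReal_lt_iff_lt_toReal ht.le (hfin x)).2 hx).trans_le (min_le_left _ _)
    have hSm : MeasurableSet {y | t < 2 * G y} := measurableSet_lt measurable_const (hG.const_mul 2)
    have hw := weak_type_trunc hG ht
    rw [← withDensity_apply _ hSm] at hw
    have hpow : ENNReal.ofReal (t ^ (p - 1)) = ENNReal.ofReal t * ENNReal.ofReal (t ^ (p - 1 - 1)) := by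
      rw [← ENNReal.ofReal_mul ht.le, Real.rpow_sub_one ht.ne' (p - 1)]
      congr 1
      field_simp
    calc volume {x | t < (min (fracMax 0 g x) N).toReal} * ENNReal.ofReal (t ^ (p - 1))
        ≤ volume {x | ENNReal.ofReal t < fracMax 0 g x} * ENNReal.ofReal (t ^ (p - 1)) := by
          gcongr
      _ = (ENNReal.ofReal t * volume {x | ENNReal.ofReal t < fracMax 0 g x}) *
          ENNReal.ofReal (t ^ (p - 1 - 1)) := by rw [hpow]; ring
      _ ≤ (2 * ENNReal.ofReal (4 ^ n) * ν {y | t < 2 * G y}) *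
          ENNReal.ofReal (t ^ (p - 1 - 1)) := by gcongr
      _ = _ := by ring
  have hlim : ∫⁻ x, fracMax 0 g x ^ p = ⨆ N : ℕ, ∫⁻ x, (min (fracMax 0 g x) N) ^ p := by
    rw [← lintegral_iSup (fun N => (hMm.min measurable_const).pow_const p)]
    · refine lintegral_congr fun x => ?_
      apply le_antisymm
      · have hc : Tendsto (fun N : ℕ => (min (fracMax 0 g x) (N : ℝ≥0∞)) ^ p) atTop
            (nhds ((min (fracMax 0 g x) ⊤) ^ p)) :=
          (ENNReal.continuous_rpow_const.tendsto _).comp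
            (tendsto_const_nhds.min ENNReal.tendsto_nat_nhds_top)
        rw [min_top_right] at hc
        exact le_of_tendsto' hc fun N => le_iSup (fun N : ℕ => (min (fracMax 0 g x) (N : ℝ≥0∞)) ^ p) N
      · exact iSup_le fun N => ENNReal.rpow_le_rpow (min_le_left _ _) hp0.le
    · intro N M hNM x
      dsimp only
      gcongr
  rw [hlim]
  refine iSup_le fun N => (hN N).trans (le_of_eq ?_)
  have hne : ENNReal.ofReal (p - 1) ≠ 0 := by simpa using hp
  rw [mul_assoc (_ * _) (ENNReal.ofReal (2 ^ (p - 1))), ← hν2, mul_assoc _ _ (_ * _),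
    ← mul_assoc _ (ENNReal.ofReal (p - 1)), ENNReal.inv_mul_cancel hne (by finiteness), one_mul]

/-! ### The fractional maximal function from `L^p` to `L^q` -/

/-- Hölder's inequality for averages over balls. -/
theorem average_le {g : EuclideanSpace ℝ (Fin n) → ℝ≥0∞} (hg : Measurable g) {p : ℝ} (hp : 1 < p)
    (c : EuclideanSpace ℝ (Fin n)) {t : ℝ} (ht : 0 < t) :
    (volume (ball c t))⁻¹ * ∫⁻ y in ball c t, g y ≤
      ((volume (ball c t))⁻¹ * ∫⁻ y in ball c t, g y ^ p) ^ (1 / p) := by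
  have hV0 := volume_ball_ne_zero' c ht
  have hVt := volume_ball_ne_top' c t
  have hpq := Real.HolderConjugate.conjExponent hp
  have h := ENNReal.lintegral_mul_le_Lp_mul_Lq (volume.restrict (ball c t)) hpq
    hg.aemeasurable (g := fun _ => 1) aemeasurable_const
  simp only [Pi.mul_apply, mul_one, ENNReal.one_rpow, lintegral_const, Measure.restrict_apply_univ,
    one_mul] at h
  calc _ ≤ (volume (ball c t))⁻¹ * ((∫⁻ y in ball c t, g y ^ p) ^ (1 / p) *
        volume (ball c t) ^ (1 / p.conjExponent)) := by gcongr
    _ = ((volume (ball c t))⁻¹ * volume (ball c t) ^ (1 / p.conjExponent)) *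
        (∫⁻ y in ball c t, g y ^ p) ^ (1 / p) := by ring
    _ = _ := by
      have he : -1 + 1 / p.conjExponent = -(1 / p) := by
        have := hpq.inv_add_inv_eq_one
        simp only [one_div]
        linarith
      have hp0 : 0 ≤ 1 / p := by positivity
      rw [ENNReal.mul_rpow_of_nonneg _ _ hp0, ← ENNReal.rpow_neg_one,
        ← ENNReal.rpow_add _ _ hV0 hVt, he, ← ENNReal.rpow_mul, neg_one_mul]

/-- Hölder's inequality for a fractional average, the exponents being related by
`1 / q = 1 / p - β`. -/
theorem frac_average_le {g : EuclideanSpace ℝ (Fin n) → ℝ≥0∞} (hg : Measurable g) {p q β : ℝ}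
    (hp : 1 < p) (hq : 1 / q = 1 / p - β)
    (c : EuclideanSpace ℝ (Fin n)) {t : ℝ} (ht : 0 < t) :
    volume (ball c t) ^ β * ((volume (ball c t))⁻¹ * ∫⁻ y in ball c t, g y) ≤
      volume (ball c t) ^ (-(1 / q)) * (∫⁻ y in ball c t, g y ^ p) ^ (1 / p) := by
  have hV0 := volume_ball_ne_zero' c ht
  have hVt := volume_ball_ne_top' c t
  have hp0 : 0 ≤ 1 / p := by positivity
  calc _ ≤ volume (ball c t) ^ β *
        ((volume (ball c t))⁻¹ * ∫⁻ y in ball c t, g y ^ p) ^ (1 / p) :=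
        mul_le_mul' le_rfl (average_le hg hp c ht)
    _ = _ := by
      rw [ENNReal.mul_rpow_of_nonneg _ _ hp0, ← mul_assoc, ← ENNReal.rpow_neg_one,
        ← ENNReal.rpow_mul, ← ENNReal.rpow_add _ _ hV0 hVt, hq]
      congr 2
      ring

/-- Hedberg's pointwise estimate: part of the average is bounded through the `L^p` norm, the rest by
the Hardy–Littlewood maximal function. -/
theorem hedberg {g : EuclideanSpace ℝ (Fin n) → ℝ≥0∞} (hg : Measurable g) {p β : ℝ}
    (hp : 1 < p) (hβ : 0 < β) (hβp : β * p < 1) (x : EuclideanSpace ℝ (Fin n)) :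
    fracMax β g x ≤ (∫⁻ y, g y ^ p) ^ β * fracMax 0 g x ^ (1 - β * p) := by
  refine iSup_le fun c => iSup_le fun t => iSup_le fun hx => ?_
  have ht : 0 < t := pos_of_mem_ball hx
  have hV0 := volume_ball_ne_zero' c ht
  have hVt := volume_ball_ne_top' c t
  have hp0 : 0 < p := by linarith
  have hM := le_fracMax 0 g hx
  rw [ENNReal.rpow_zero, one_mul] at hM
  have hA := average_le hg hp c ht
  set A := (volume (ball c t))⁻¹ * ∫⁻ y in ball c t, g y
  calc volume (ball c t) ^ β * A
      = volume (ball c t) ^ β * A ^ (β * p) * A ^ (1 - β * p) := by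
        rw [mul_assoc, ← ENNReal.rpow_add_of_nonneg _ _ (by positivity) (by linarith),
          add_sub_cancel, ENNReal.rpow_one]
    _ ≤ volume (ball c t) ^ β *
        (((volume (ball c t))⁻¹ * ∫⁻ y in ball c t, g y ^ p) ^ (1 / p)) ^ (β * p) *
          fracMax 0 g x ^ (1 - β * p) := by
        refine mul_le_mul' (mul_le_mul' le_rfl (ENNReal.rpow_le_rpow hA (by positivity)))
          (ENNReal.rpow_le_rpow hM (by linarith))
    _ = (∫⁻ y in ball c t, g y ^ p) ^ β * fracMax 0 g x ^ (1 - β * p) := by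
        rw [← ENNReal.rpow_mul]
        congr 1
        rw [show 1 / p * (β * p) = β by field_simp, ← ENNReal.mul_rpow_of_nonneg _ _ hβ.le,
          ← mul_assoc, ENNReal.mul_inv_cancel hV0 hVt, one_mul]
    _ ≤ _ := by
        gcongr
        exact Measure.restrict_le_self

/-- The fractional maximal function maps `L^p` to `L^q` when `1 / q = 1 / p - β > 0`. -/
theorem fracMax_strong {p q β : ℝ} (hp : 1 < p) (hβ : 0 < β) (hβp : β * p < 1)
    (hq : 1 / q = 1 / p - β) :
    ∃ K : ℝ≥0∞, K ≠ ⊤ ∧ ∀ G : EuclideanSpace ℝ (Fin n) → ℝ, Measurable G → (∀ y, 0 ≤ G y) →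
      (∫⁻ x, fracMax β (fun y => ENNReal.ofReal (G y)) x ^ q) ^ (1 / q) ≤
        K * (∫⁻ y, ENNReal.ofReal (G y) ^ p) ^ (1 / p) := by
  obtain ⟨K, hK, h⟩ := strong_type (n := n) hp
  have hp0 : 0 < p := by linarith
  have hq0' : 0 < 1 / q := by
    rw [hq, sub_pos, lt_div_iff₀ hp0]; exact hβp
  have hq0 : 0 < q := by simpa using hq0'
  have he : (1 - β * p) * q = p := by
    have h2 : 1 / q * (p * q) = (1 / p - β) * (p * q) := by rw [hq]
    field_simp at h2
    linarith
  refine ⟨K ^ (1 / q), by finiteness, fun G hG hG0 => ?_⟩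
  set g : EuclideanSpace ℝ (Fin n) → ℝ≥0∞ := fun y => ENNReal.ofReal (G y) with hgdef
  have hg : Measurable g := hG.ennreal_ofReal
  set I := ∫⁻ y, g y ^ p with hI
  calc (∫⁻ x, fracMax β g x ^ q) ^ (1 / q)
      ≤ (∫⁻ x, I ^ (β * q) * fracMax 0 g x ^ p) ^ (1 / q) := by
        refine ENNReal.rpow_le_rpow (lintegral_mono fun x => ?_) hq0'.le
        calc fracMax β g x ^ q ≤ (I ^ β * fracMax 0 g x ^ (1 - β * p)) ^ q :=
              ENNReal.rpow_le_rpow (hedberg hg hp hβ hβp x) hq0.le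
          _ = _ := by
            rw [ENNReal.mul_rpow_of_nonneg _ _ hq0.le, ← ENNReal.rpow_mul, ← ENNReal.rpow_mul, he]
    _ ≤ (I ^ (β * q) * (K * I)) ^ (1 / q) := by
        rw [lintegral_const_mul _ ((measurable_fracMax 0 g).pow_const p)]
        exact ENNReal.rpow_le_rpow (mul_le_mul' le_rfl (h G hG hG0)) hq0'.le
    _ = K ^ (1 / q) * I ^ (1 / p) := by
        rw [mul_left_comm, ENNReal.mul_rpow_of_nonneg _ _ hq0'.le,
          ENNReal.mul_rpow_of_nonneg _ _ hq0'.le, ← ENNReal.rpow_mul,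
          show β * q * (1 / q) = β by field_simp,
          ← ENNReal.rpow_add_of_nonneg _ _ hβ.le hq0'.le, hq, add_sub_cancel]

/-! ### Local norms of Morrey functions -/

/-- If `a ≤ F` beyond `t`, then `a` is at most the real-valued essential infimum of `F` there. The
liminf defining it is not a junk value, because a real-valued function is bounded on some set of
positive measure. -/
theorem le_essInf_Ioi {F : ℝ → ℝ} {a t : ℝ} (h : ∀ s, t < s → a ≤ F s) :
    a ≤ essInf F (volume.restrict (Ioi t)) := by
  have hne : (ae (volume.restrict (Ioi t))).NeBot := by
    rw [ae_neBot]
    intro h0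
    have := congrArg (fun μ => μ univ) h0
    simp at this
  refine le_essInf_of_ae_le a ?_ ?_
  · filter_upwards [ae_restrict_mem measurableSet_Ioi] with s hs using h s hs
  · obtain ⟨M, hM⟩ : ∃ M : ℕ, ∃ᶠ s in ae (volume.restrict (Ioi t)), F s ≤ M := by
      by_contra hcon
      push Not at hcon
      have hall := eventually_countable_forall.2 hcon
      obtain ⟨s, hs⟩ := hall.exists
      obtain ⟨N, hN⟩ := exists_nat_gt (F s)
      exact absurd (hs N) (not_lt.2 hN.le)
    exact IsCoboundedUnder.of_frequently_le hM

/-- The local `L^p` norm of a Morrey function on `B(x,t)` is bounded, through every larger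
concentric ball, by the essential infimum of `φ(x,s) s^(n/p)` over `s > t`. -/
theorem local_norm_le {p : ℝ} (hp : 1 < p) {φ : EuclideanSpace ℝ (Fin n) → ℝ → ℝ}
    (hφ : ∀ x r, 0 < r → 0 < φ x r) {f : EuclideanSpace ℝ (Fin n) → ℝ}
    (hfin : morreyNorm p φ f < ⊤) (x : EuclideanSpace ℝ (Fin n)) {t : ℝ} (ht : 0 < t) :
    (∫⁻ y in ball x t, ENNReal.ofReal |f y| ^ p) ^ (1 / p) ≤
      volume (ball (0 : EuclideanSpace ℝ (Fin n)) 1) ^ (1 / p) * morreyNorm p φ f *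
        ENNReal.ofReal (essInf (fun s => φ x s * s ^ ((n : ℝ) / p)) (volume.restrict (Ioi t))) := by
  have hp0 : 0 < p := by linarith
  have hp0' : 0 ≤ 1 / p := by positivity
  set v := volume (ball (0 : EuclideanSpace ℝ (Fin n)) 1)
  set c := v ^ (1 / p) * morreyNorm p φ f with hc
  have hct : c ≠ ⊤ := by
    have : v ≠ ⊤ := volume_ball_ne_top' _ _
    finiteness
  set L := (∫⁻ y in ball x t, ENNReal.ofReal |f y| ^ p) ^ (1 / p) with hL
  have key : ∀ s, t < s → L ≤ c * ENNReal.ofReal (φ x s * s ^ ((n : ℝ) / p)) := by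
    intro s hts
    have hs : 0 < s := ht.trans hts
    have hV0 := volume_ball_ne_zero' x hs
    have hVt := volume_ball_ne_top' x s
    have hφs := hφ x s hs
    have h1 : ENNReal.ofReal ((φ x s)⁻¹) * ((volume (ball x s))⁻¹ *
        ∫⁻ y in ball x s, ENNReal.ofReal (|f y| ^ p)) ^ (1 / p) ≤ morreyNorm p φ f :=
      le_iSup_of_le x (le_iSup_of_le s (le_iSup_of_le hs le_rfl))
    have hV : volume (ball x s) ^ (1 / p) = v ^ (1 / p) * ENNReal.ofReal (s ^ ((n : ℝ) / p)) := by
      rw [← mul_one s, volume_ball_mul x hs, Measure.addHaar_ball_center volume x,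
        ENNReal.mul_rpow_of_nonneg _ _ hp0', mul_comm, mul_one,
        ENNReal.ofReal_rpow_of_nonneg (by positivity) hp0', ← Real.rpow_natCast,
        ← Real.rpow_mul hs.le, mul_one_div]
    calc L ≤ (∫⁻ y in ball x s, ENNReal.ofReal |f y| ^ p) ^ (1 / p) := by
          rw [hL]
          gcongr
      _ = volume (ball x s) ^ (1 / p) * ((volume (ball x s))⁻¹ *
        ∫⁻ y in ball x s, ENNReal.ofReal (|f y| ^ p)) ^ (1 / p) := by
          rw [← ENNReal.mul_rpow_of_nonneg _ _ hp0', ← mul_assoc, ENNReal.mul_inv_cancel hV0 hVt,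
            one_mul]
          simp_rw [ENNReal.ofReal_rpow_of_nonneg (abs_nonneg _) hp0.le]
      _ = (volume (ball x s) ^ (1 / p) * ENNReal.ofReal (φ x s)) * (ENNReal.ofReal ((φ x s)⁻¹) *
          ((volume (ball x s))⁻¹ *
        ∫⁻ y in ball x s, ENNReal.ofReal (|f y| ^ p)) ^ (1 / p)) := by
          rw [mul_assoc, ← mul_assoc (ENNReal.ofReal (φ x s)), ← ENNReal.ofReal_mul hφs.le,
            mul_inv_cancel₀ hφs.ne', ENNReal.ofReal_one, one_mul]
      _ ≤ (volume (ball x s) ^ (1 / p) * ENNReal.ofReal (φ x s)) * morreyNorm p φ f := by gcongr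
      _ = _ := by
          rw [hV, hc, ENNReal.ofReal_mul hφs.le]
          ring
  rcases eq_or_ne c 0 with h0 | h0
  · have := key (t + 1) (by linarith)
    rw [h0, zero_mul] at this ⊢
    exact this
  · have hdiv : ∀ s, t < s → L / c ≤ ENNReal.ofReal (φ x s * s ^ ((n : ℝ) / p)) := fun s hs =>
      ENNReal.div_le_of_le_mul' (key s hs)
    have hfinLc : L / c ≠ ⊤ := ((hdiv (t + 1) (by linarith)).trans_lt ENNReal.ofReal_lt_top).ne
    have hle := le_essInf_Ioi (F := fun s => φ x s * s ^ ((n : ℝ) / p)) (a := (L / c).toReal)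
      fun s hs => ENNReal.toReal_le_of_le_ofReal
        (mul_nonneg (hφ x s (ht.trans hs)).le (Real.rpow_nonneg (ht.trans hs).le _)) (hdiv s hs)
    have h2 := ENNReal.ofReal_le_ofReal hle
    rw [ENNReal.ofReal_toReal hfinLc] at h2
    calc L = c * (L / c) := (ENNReal.mul_div_cancel h0 hct).symm
      _ ≤ _ := by gcongr

/-- The normalised local norm `|B(·,ρ)|^(-1/q) ‖f‖_{L^p(B(x,3ρ))}`, for all `ρ ≥ r`, is controlled by
the Morrey norm of `f` and the supremum occurring in the condition on `φ` and `ψ`. -/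
theorem scaled_norm_le {p q : ℝ} (hp : 1 < p) {φ : EuclideanSpace ℝ (Fin n) → ℝ → ℝ}
    (hφ : ∀ x r, 0 < r → 0 < φ x r) {f : EuclideanSpace ℝ (Fin n) → ℝ}
    (hfin : morreyNorm p φ f < ⊤) (x c : EuclideanSpace ℝ (Fin n)) {r ρ : ℝ} (hr : 0 < r)
    (hρ : r ≤ ρ) :
    volume (ball c ρ) ^ (-(1 / q)) *
      (∫⁻ y in ball x (3 * ρ), ENNReal.ofReal |f y| ^ p) ^ (1 / p) ≤
      (volume (ball (0 : EuclideanSpace ℝ (Fin n)) 1) ^ (-(1 / q)) *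
        ENNReal.ofReal (3 ^ ((n : ℝ) / q)) *
        volume (ball (0 : EuclideanSpace ℝ (Fin n)) 1) ^ (1 / p)) * (morreyNorm p φ f *
        ⨆ (t : ℝ) (_ : r < t), ENNReal.ofReal
          ((essInf (fun s => φ x s * s ^ ((n : ℝ) / p)) (volume.restrict (Ioi t))) *
            t ^ (-((n : ℝ) / q)))) := by
  have hρ0 : 0 < ρ := hr.trans_le hρ
  set v := volume (ball (0 : EuclideanSpace ℝ (Fin n)) 1)
  have hv0 : v ≠ 0 := volume_ball_ne_zero' _ one_pos
  have hvt : v ≠ ⊤ := volume_ball_ne_top' _ _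
  set e := essInf (fun s => φ x s * s ^ ((n : ℝ) / p)) (volume.restrict (Ioi (3 * ρ))) with he
  have he0 : 0 ≤ e := le_essInf_Ioi fun s hs => by
    have hs0 : 0 < s := by linarith
    exact mul_nonneg (hφ x s hs0).le (Real.rpow_nonneg hs0.le _)
  have hV : volume (ball c ρ) ^ (-(1 / q)) = v ^ (-(1 / q)) * ENNReal.ofReal (3 ^ ((n : ℝ) / q)) *
      ENNReal.ofReal ((3 * ρ) ^ (-((n : ℝ) / q))) := by
    rw [mul_assoc, ← ENNReal.ofReal_mul (by positivity), Real.mul_rpow (by norm_num) hρ0.le,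
      ← mul_assoc, ← Real.rpow_add (by norm_num), add_neg_cancel, Real.rpow_zero, one_mul,
      ← mul_one ρ, volume_ball_mul c hρ0, Measure.addHaar_ball_center volume c, mul_one,
      ENNReal.mul_rpow_of_ne_top ENNReal.ofReal_ne_top hvt, mul_comm,
      ENNReal.ofReal_rpow_of_pos (by positivity), ← Real.rpow_natCast, ← Real.rpow_mul hρ0.le]
    congr 3
    ring
  have hS : ENNReal.ofReal e * ENNReal.ofReal ((3 * ρ) ^ (-((n : ℝ) / q))) ≤
      ⨆ (t : ℝ) (_ : r < t), ENNReal.ofReal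
          ((essInf (fun s => φ x s * s ^ ((n : ℝ) / p)) (volume.restrict (Ioi t))) *
            t ^ (-((n : ℝ) / q))) := by
    rw [← ENNReal.ofReal_mul he0]
    exact le_iSup_of_le (3 * ρ) (le_iSup_of_le (by linarith) le_rfl)
  calc _ ≤ (v ^ (-(1 / q)) * ENNReal.ofReal (3 ^ ((n : ℝ) / q)) *
      ENNReal.ofReal ((3 * ρ) ^ (-((n : ℝ) / q)))) *
        (v ^ (1 / p) * morreyNorm p φ f * ENNReal.ofReal e) := by
        rw [hV]
        exact mul_le_mul' le_rfl (local_norm_le hp hφ hfin x (by positivity))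
    _ = (v ^ (-(1 / q)) * ENNReal.ofReal (3 ^ ((n : ℝ) / q)) * v ^ (1 / p)) * (morreyNorm p φ f *
      (ENNReal.ofReal e * ENNReal.ofReal ((3 * ρ) ^ (-((n : ℝ) / q))))) := by ring
    _ ≤ _ := mul_le_mul' le_rfl (mul_le_mul' le_rfl hS)

/-! ### The multilinear operator -/

theorem ennreal_rpow_sum {ι : Type*} (s : Finset ι) (e : ι → ℝ) {V : ℝ≥0∞} (h0 : V ≠ 0)
    (ht : V ≠ ⊤) : V ^ (∑ i ∈ s, e i) = ∏ i ∈ s, V ^ e i := by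
  classical
  induction s using Finset.induction with
  | empty => simp
  | insert a s ha ih => rw [Finset.sum_insert ha, Finset.prod_insert ha, ENNReal.rpow_add _ _ h0 ht, ih]

/-- Hölder's inequality for a product of several functions, `∑ 1 / q i = 1 / q`. -/
theorem holder_prod {Ω ι : Type*} [MeasurableSpace Ω] [Fintype ι] (μ : Measure Ω)
    {F : ι → Ω → ℝ≥0∞} (hF : ∀ i, Measurable (F i)) {q' : ι → ℝ} {q : ℝ}
    (hq' : ∀ i, 0 < q' i) (hq : 0 < q) (hsum : 1 / q = ∑ i, 1 / q' i) :
    (∫⁻ x, (∏ i, F i x) ^ q ∂μ) ^ (1 / q) ≤ ∏ i, (∫⁻ x, F i x ^ q' i ∂μ) ^ (1 / q' i) := by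
  have h := ENNReal.lintegral_prod_norm_pow_le (μ := μ) Finset.univ (f := fun i x => F i x ^ q' i)
    (p := fun i => q * (1 / q' i)) (fun i _ => ((hF i).pow_const _).aemeasurable)
    (by rw [← Finset.mul_sum, ← hsum]; field_simp)
    (fun i _ => by have := hq' i; positivity)
  have hL : ∀ x, ∏ i, (F i x ^ q' i) ^ (q * (1 / q' i)) = (∏ i, F i x) ^ q := by
    intro x
    rw [← ENNReal.prod_rpow_of_nonneg hq.le]
    refine Finset.prod_congr rfl fun i _ => ?_
    have := hq' i
    rw [← ENNReal.rpow_mul]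
    congr 1
    field_simp
  simp_rw [hL] at h
  have h2 := ENNReal.rpow_le_rpow h (by positivity : 0 ≤ 1 / q)
  rw [← ENNReal.prod_rpow_of_nonneg (by positivity)] at h2
  refine h2.trans_eq (Finset.prod_congr rfl fun i _ => ?_)
  rw [← ENNReal.rpow_mul]
  congr 1
  field_simp

/-- On `B(x,r)`, balls of radius at most `r` only see the restrictions of the functions to
`B(x,3r)`, while those of larger radius `t` are contained in `B(x,3t)`. -/
theorem multMFrac_le {m : ℕ} {α p q' : Fin m → ℝ} (hp : ∀ i, 1 < p i)
    (hq' : ∀ i, 1 / q' i = 1 / p i - α i / (n : ℝ))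
    {f : Fin m → EuclideanSpace ℝ (Fin n) → ℝ} (hf : ∀ i, Measurable (f i))
    {x y : EuclideanSpace ℝ (Fin n)} {r : ℝ} (hy : y ∈ ball x r) (D : Fin m → ℝ≥0∞)
    (hD : ∀ i (c : EuclideanSpace ℝ (Fin n)) t, r ≤ t → volume (ball c t) ^ (-(1 / q' i)) *
      (∫⁻ z in ball x (3 * t), ENNReal.ofReal |f i z| ^ p i) ^ (1 / p i) ≤ D i) :
    multMFrac n m (∑ i, α i) f y ≤
      max (∏ i, fracMax (α i / n)
        (fun z => ENNReal.ofReal ((ball x (3 * r)).indicator (fun z => |f i z|) z)) y) (∏ i, D i) := by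
  refine iSup_le fun c => iSup_le fun t => iSup_le fun hyt => ?_
  have ht : 0 < t := pos_of_mem_ball hyt
  have hV0 := volume_ball_ne_zero' c ht
  have hVt := volume_ball_ne_top' c t
  rw [Finset.sum_div, ennreal_rpow_sum _ _ hV0 hVt, ← Finset.prod_mul_distrib]
  have hsub : ∀ s, r ≤ s → t ≤ s → ball c t ⊆ ball x (3 * s) := by
    intro s hrs hts
    apply ball_subset_ball'
    have h1 : dist c x ≤ dist y c + dist y x := dist_triangle_left c x y
    rw [mem_ball] at hy hyt
    linarith
  rcases le_total t r with htr | hrt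
  · refine le_trans (Finset.prod_le_prod' fun i _ => ?_) (le_max_left _ _)
    refine le_trans (le_of_eq ?_) (le_fracMax _ _ hyt)
    congr 2
    refine setLIntegral_congr_fun measurableSet_ball fun z hz => ?_
    simp only [indicator_of_mem (hsub r le_rfl htr hz)]
  · refine le_trans (Finset.prod_le_prod' fun i _ => ?_) (le_max_right _ _)
    refine (frac_average_le (hf i).abs.ennreal_ofReal (hp i) (hq' i) c ht).trans
      (le_trans ?_ (hD i c t hrt))
    refine mul_le_mul' le_rfl (ENNReal.rpow_le_rpow (lintegral_mono_set (hsub t hrt le_rfl)) ?_)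
    have := hp i
    positivity

end MorreyBounds

theorem stmt1 (n m : ℕ) (hn : 1 ≤ n) (hm : 1 ≤ m)
    (α p q' : Fin m → ℝ) (hα : ∀ i, 0 < α i ∧ α i < (n : ℝ))
    (hp : ∀ i, 1 < p i ∧ p i < (n : ℝ) / α i)
    (q : ℝ) (hq : 1 / q = (∑ i, 1 / p i) - (∑ i, α i) / (n : ℝ)) (hq1 : 1 / q < 1)
    (hq' : ∀ i, 1 / q' i = 1 / p i - α i / (n : ℝ))
    (φ : Fin m → EuclideanSpace ℝ (Fin n) → ℝ → ℝ)
    (ψ : EuclideanSpace ℝ (Fin n) → ℝ → ℝ)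
    (hφm : ∀ i, Measurable (fun z : EuclideanSpace ℝ (Fin n) × ℝ => φ i z.1 z.2))
    (hφpos : ∀ i x r, 0 < r → 0 < φ i x r)
    (hψm : Measurable (fun z : EuclideanSpace ℝ (Fin n) × ℝ => ψ z.1 z.2))
    (hψpos : ∀ x r, 0 < r → 0 < ψ x r)
    (C : ℝ) (hC : 0 < C)
    (hcond : ∀ x r, 0 < r →
      (∏ i, ⨆ (t : ℝ) (_ : r < t),
        ENNReal.ofReal
          ((essInf (fun s => φ i x s * s ^ ((n : ℝ) / p i)) (volume.restrict (Set.Ioi t))) *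
            t ^ (-((n : ℝ) / q' i)))) ≤
      ENNReal.ofReal (C * ψ x r)) :
    ∃ C' > (0 : ℝ), ∀ f : Fin m → EuclideanSpace ℝ (Fin n) → ℝ,
      (∀ i, Measurable (f i)) →
      (∀ i x r, 0 < r → (∫⁻ y in ball x r, ENNReal.ofReal (|f i y| ^ p i)) < ⊤) →
      (∀ i, morreyNorm (p i) (φ i) (f i) < ⊤) →
      morreyNormE q ψ (multMFrac n m (∑ i, α i) f) ≤
        ENNReal.ofReal C' * ∏ i, morreyNorm (p i) (φ i) (f i) := by
  have hn0 : (0 : ℝ) < n := by exact_mod_cast hn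
  have hpi : ∀ i, 1 < p i := fun i => (hp i).1
  have hβ : ∀ i, 0 < α i / n := fun i => div_pos (hα i).1 hn0
  have hβp : ∀ i, α i / n * p i < 1 := by
    intro i
    have h := (hp i).2
    rw [lt_div_iff₀ (hα i).1] at h
    rw [div_mul_eq_mul_div, div_lt_one hn0]
    linarith
  have hq'pos : ∀ i, 0 < 1 / q' i := by
    intro i
    rw [hq' i, sub_pos, lt_div_iff₀ (by linarith [hpi i])]
    exact hβp i
  have hsum : 1 / q = ∑ i, 1 / q' i := by
    simp_rw [hq']
    rw [hq, Finset.sum_sub_distrib, Finset.sum_div]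
  have hqpos' : 0 < 1 / q := by
    rw [hsum]
    exact Finset.sum_pos (fun i _ => hq'pos i) ⟨⟨0, hm⟩, Finset.mem_univ _⟩
  have hqpos : 0 < q := by simpa using hqpos'
  choose K hKt hK using fun i => fracMax_strong (n := n) (hpi i) (hβ i) (hβp i) (hq' i)
  set v := volume (ball (0 : EuclideanSpace ℝ (Fin n)) 1) with hv
  have hv0 : v ≠ 0 := volume_ball_ne_zero' _ one_pos
  have hvt : v ≠ ⊤ := volume_ball_ne_top' _ _
  -- The constants of `scaled_norm_le`.
  set k : Fin m → ℝ≥0∞ := fun i =>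
    v ^ (-(1 / q' i)) * ENNReal.ofReal (3 ^ ((n : ℝ) / q' i)) * v ^ (1 / p i) with hk
  have hkt : ∀ i, k i ≠ ⊤ := by
    intro i
    have h1 : v ^ (-(1 / q' i)) ≠ ⊤ := ENNReal.rpow_ne_top_of_ne_zero hv0 hvt
    have h2 : v ^ (1 / p i) ≠ ⊤ := ENNReal.rpow_ne_top_of_ne_zero hv0 hvt
    simp only [hk]
    finiteness
  set X : ℝ≥0∞ := (∏ i, K i * k i) + ∏ i, k i with hX
  have hXt : X ≠ ⊤ := by
    refine ENNReal.add_ne_top.2 ⟨ENNReal.prod_ne_top fun i _ => ?_,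
      ENNReal.prod_ne_top fun i _ => hkt i⟩
    exact ENNReal.mul_ne_top (hKt i) (hkt i)
  refine ⟨(X * ENNReal.ofReal C).toReal + 1, by positivity, fun f hf _ hfN => ?_⟩
  refine iSup_le fun x => iSup_le fun r => iSup_le fun hr => ?_
  set N : Fin m → ℝ≥0∞ := fun i => morreyNorm (p i) (φ i) (f i) with hN
  set S : Fin m → ℝ≥0∞ := fun i => ⨆ (t : ℝ) (_ : r < t),
        ENNReal.ofReal
          ((essInf (fun s => φ i x s * s ^ ((n : ℝ) / p i)) (volume.restrict (Set.Ioi t))) *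
            t ^ (-((n : ℝ) / q' i))) with hS
  set D : Fin m → ℝ≥0∞ := fun i => k i * (N i * S i) with hD
  have hDle : ∀ i (c : EuclideanSpace ℝ (Fin n)) t, r ≤ t → volume (ball c t) ^ (-(1 / q' i)) *
      (∫⁻ z in ball x (3 * t), ENNReal.ofReal |f i z| ^ p i) ^ (1 / p i) ≤ D i :=
    fun i c t hrt => scaled_norm_le (hpi i) (hφpos i) (hfN i) x c hr hrt
  set F : Fin m → EuclideanSpace ℝ (Fin n) → ℝ≥0∞ := fun i => fracMax (α i / n)
        (fun z => ENNReal.ofReal ((ball x (3 * r)).indicator (fun z => |f i z|) z)) with hF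
  have hFm : ∀ i, Measurable (F i) := fun i => measurable_fracMax _ _
  have hV0 := volume_ball_ne_zero' x hr
  have hVt := volume_ball_ne_top' x r
  set V := volume (ball x r) with hVdef
  -- The local part: Hölder's inequality and the `L^p → L^q` bound for each factor.
  have hlocal : (V⁻¹ * ∫⁻ y in ball x r, (∏ i, F i y) ^ q) ^ (1 / q) ≤ ∏ i, K i * D i := by
    have hFi : ∀ i, (∫⁻ y in ball x r, F i y ^ q' i) ^ (1 / q' i) ≤
        K i * (∫⁻ z in ball x (3 * r), ENNReal.ofReal |f i z| ^ p i) ^ (1 / p i) := by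
      intro i
      have hpos : 0 < p i := by linarith [hpi i]
      have h1 := hK i ((ball x (3 * r)).indicator fun z => |f i z|)
        ((hf i).abs.indicator measurableSet_ball)
        (fun y => indicator_nonneg (fun _ _ => abs_nonneg _) y)
      refine (ENNReal.rpow_le_rpow (setLIntegral_le_lintegral _ _) (hq'pos i).le).trans
        (h1.trans_eq ?_)
      congr 2
      rw [← lintegral_indicator measurableSet_ball]
      refine lintegral_congr fun y => ?_
      by_cases hy : y ∈ ball x (3 * r)
      · simp only [indicator_of_mem hy]
      · simp only [indicator_of_notMem hy, ENNReal.ofReal_zero, ENNReal.zero_rpow_of_pos hpos]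
    calc _ = V ^ (-(1 / q)) * (∫⁻ y in ball x r, (∏ i, F i y) ^ q) ^ (1 / q) := by
          rw [ENNReal.mul_rpow_of_nonneg _ _ hqpos'.le, ENNReal.inv_rpow, ENNReal.rpow_neg]
      _ ≤ V ^ (-(1 / q)) * ∏ i, (∫⁻ y in ball x r, F i y ^ q' i) ^ (1 / q' i) :=
          mul_le_mul' le_rfl (holder_prod _ hFm (fun i => by simpa using hq'pos i) hqpos hsum)
      _ = ∏ i, V ^ (-(1 / q' i)) * (∫⁻ y in ball x r, F i y ^ q' i) ^ (1 / q' i) := by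
          rw [hsum, ← Finset.sum_neg_distrib, ennreal_rpow_sum _ _ hV0 hVt,
            ← Finset.prod_mul_distrib]
      _ ≤ ∏ i, K i * D i := by
          refine Finset.prod_le_prod' fun i _ => ?_
          refine (mul_le_mul' le_rfl (hFi i)).trans ?_
          rw [mul_left_comm]
          exact mul_le_mul' le_rfl (hDle i x r le_rfl)
  have hmain : (V⁻¹ * ∫⁻ y in ball x r, (multMFrac n m (∑ i, α i) f y) ^ q) ^ (1 / q) ≤
      (∏ i, K i * D i) + ∏ i, D i := by
    calc _ ≤ (V⁻¹ * ∫⁻ y in ball x r, ((∏ i, F i y) ^ q + (∏ i, D i) ^ q)) ^ (1 / q) := by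
          refine ENNReal.rpow_le_rpow (mul_le_mul' le_rfl
            (setLIntegral_mono' measurableSet_ball fun y hy => ?_)) hqpos'.le
          refine (ENNReal.rpow_le_rpow (multMFrac_le hpi hq' hf hy D hDle) hqpos.le).trans ?_
          rcases max_cases (∏ i, F i y) (∏ i, D i) with h | h
          · exact (congrArg (· ^ q) h.1).le.trans le_self_add
          · exact (congrArg (· ^ q) h.1).le.trans le_add_self
      _ = (V⁻¹ * (∫⁻ y in ball x r, (∏ i, F i y) ^ q) + (∏ i, D i) ^ q) ^ (1 / q) := by
          rw [lintegral_add_right _ measurable_const, setLIntegral_const, mul_add,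
            mul_left_comm, ENNReal.inv_mul_cancel hV0 hVt, mul_one]
      _ ≤ (V⁻¹ * ∫⁻ y in ball x r, (∏ i, F i y) ^ q) ^ (1 / q) + ((∏ i, D i) ^ q) ^ (1 / q) :=
          ENNReal.rpow_add_le_add_rpow _ _ hqpos'.le hq1.le
      _ ≤ _ := by
          rw [← ENNReal.rpow_mul, mul_one_div_cancel hqpos.ne', ENNReal.rpow_one]
          gcongr
  have hψ := hψpos x r hr
  have hfac : (∏ i, K i * D i) + ∏ i, D i = X * (∏ i, N i) * ∏ i, S i := by
    simp only [hD, hX, Finset.prod_mul_distrib]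
    ring
  calc _ ≤ ENNReal.ofReal ((ψ x r)⁻¹) * (X * (∏ i, N i) * ∏ i, S i) := by
        rw [← hfac]
        exact mul_le_mul' le_rfl hmain
    _ ≤ ENNReal.ofReal ((ψ x r)⁻¹) * (X * (∏ i, N i) * ENNReal.ofReal (C * ψ x r)) :=
        mul_le_mul' le_rfl (mul_le_mul' le_rfl (hcond x r hr))
    _ = X * ENNReal.ofReal C * ∏ i, N i := by
        have : ENNReal.ofReal ((ψ x r)⁻¹) * ENNReal.ofReal (ψ x r) = 1 := by
          rw [← ENNReal.ofReal_mul (by positivity), inv_mul_cancel₀ hψ.ne', ENNReal.ofReal_one]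
        rw [ENNReal.ofReal_mul hC.le]
        calc _ = X * ENNReal.ofReal C * (∏ i, N i) *
            (ENNReal.ofReal ((ψ x r)⁻¹) * ENNReal.ofReal (ψ x r)) := by ring
          _ = _ := by rw [this, mul_one]
    _ ≤ _ := by
        refine mul_le_mul' ?_ le_rfl
        rw [← ENNReal.ofReal_toReal (ENNReal.mul_ne_top hXt ENNReal.ofReal_ne_top)]
        exact ENNReal.ofReal_le_ofReal (by simp)
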